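/- Let d ∈ ℕ, m ∈ ℕ with m ≥ 2, c > 0, σ ≤ 1, and let f : ℝ^d → ℝ be a Gevrey function on ℝ^d with parameters c and σ. Let x ∈ ℝ^d satisfy m c d ‖x‖_∞ < 1. Then |f_{(2m)}(x) − f(0) − ∇f(0)·x| ≤ 2 Σ_{k=2m+1}^∞ (m^k / k!) · |Σ_{α ∈ [d]^k} ∂_α f(0) x^α|. -/

import Mathlib

/-!
Restrict `f` to the line through `0` and `x`. The Gevrey bound with `σ ≤ 1` bounds the `k`-th
derivative of `t ↦ f(t y)` by `k! (c d ‖y‖_∞)^k / 2`, so for `c d ‖y‖_∞ < 1` its Taylor series at `0`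
converges to `f y` at `t = 1` (`hasSum_taylor`). The hypothesis makes this applicable to all
`y = ℓ x` with `|ℓ| ≤ m`. Since the `k`-th Taylor coefficient is homogeneous of degree `k`, summing
over `ℓ` gives

`f_{(2m)}(x) = Σ_k (Σ_ℓ a_ℓ ℓ^k) (1/k!) Σ_{α ∈ [d]^k} ∂_α f(0) x^α`.

For `ℓ ≠ 0` one has `a_ℓ ℓ = (-1)^(ℓ+1) C(2m, m+ℓ) / C(2m, m)`. Hence the moments `Σ_ℓ a_ℓ ℓ^k` are
`1, 1, 0, …, 0` for `k = 0, …, 2m`, by `a_{-ℓ} = -a_ℓ` (`ℓ ≠ 0`) for `k = 0` and by the vanishing of the `2m`-th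
finite difference of polynomials of degree below `2m` otherwise
(`sum_centralCoeff`, `sum_centralCoeff_mul_pow_succ`). So the terms with `k ≤ 2m` are exactly
`f(0) + ∇f(0)·x`. For larger `k` the moment is at most `2 m^k` in absolute value, because `C(2m, m+ℓ) ≤ C(2m, m)`
(`abs_sum_centralCoeff_mul_pow_succ_le`).
-/

/-- Partial derivative of `f : ℝ^d → ℝ` in the `j`-th coordinate direction. -/
noncomputable def pderiv' {d : ℕ} (j : Fin d) (f : (Fin d → ℝ) → ℝ) :
    (Fin d → ℝ) → ℝ :=
  fun x => fderiv ℝ f x (Pi.single j 1)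

/-- Consecutive partial differentiation `∂_α = ∂_{α₁}∂_{α₂}⋯∂_{α_k}` along a
multi-index `α ∈ [d]^k`, encoded as a list of coordinates. -/
noncomputable def pderivMulti {d : ℕ} : List (Fin d) → ((Fin d → ℝ) → ℝ) → ((Fin d → ℝ) → ℝ)
  | [], f => f
  | j :: α, f => pderiv' j (pderivMulti α f)

/-- The central difference coefficients `a_ℓ^{(2m)}`. -/
noncomputable def centralCoeff (m : ℕ) (ℓ : ℤ) : ℝ :=
  if ℓ = 0 then 1
  else (-1 : ℝ) ^ (ℓ + 1) * (Nat.factorial m : ℝ) ^ 2 /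
    ((ℓ : ℝ) * (Nat.factorial (m + ℓ).toNat : ℝ) * (Nat.factorial (m - ℓ).toNat : ℝ))

/-- The `2m`-th order smoothing `f_{(2m)}(x) = Σ_{ℓ=−m}^m a_ℓ^{(2m)} f(ℓ x)`. -/
noncomputable def smoothing {d : ℕ} (m : ℕ) (f : (Fin d → ℝ) → ℝ) (x : Fin d → ℝ) : ℝ :=
  ∑ ℓ ∈ Finset.Icc (-(m : ℤ)) (m : ℤ), centralCoeff m ℓ * f ((ℓ : ℝ) • x)

/-! ### Taylor expansion along a line -/

/-- The `k`-th directional derivative of `f` along `x` at `t • x`, written out in coordinates as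
`Σ_{α ∈ [d]^k} ∂_α f(t x) x^α`. -/
noncomputable def dirDeriv {d : ℕ} (f : (Fin d → ℝ) → ℝ) (x : Fin d → ℝ) (k : ℕ) (t : ℝ) : ℝ :=
  ∑ α : Fin k → Fin d, pderivMulti (List.ofFn α) f (t • x) * ∏ i, x (α i)

lemma contDiff_pderivMulti {d : ℕ} {f : (Fin d → ℝ) → ℝ} (hf : ContDiff ℝ (⊤ : ℕ∞) f)
    (α : List (Fin d)) : ContDiff ℝ (⊤ : ℕ∞) (pderivMulti α f) := by
  induction α with
  | nil => exact hf
  | cons j α ih =>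
    have h := ih.fderiv_right (m := ((⊤ : ℕ∞) : WithTop ℕ∞)) (by simp)
    exact h.clm_apply contDiff_const

/-- Splitting off the first entry of `α ∈ [d]^(k+1)` matches the chain rule for `t ↦ ∂_α f(t x)`,
because `pderivMulti` applies the first entry last. -/
lemma hasDerivAt_dirDeriv {d : ℕ} {f : (Fin d → ℝ) → ℝ} (hf : ContDiff ℝ (⊤ : ℕ∞) f)
    (x : Fin d → ℝ) (k : ℕ) (t : ℝ) :
    HasDerivAt (dirDeriv f x k) (dirDeriv f x (k + 1) t) t := by
  have key : dirDeriv f x (k + 1) t = ∑ α : Fin k → Fin d,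
      fderiv ℝ (pderivMulti (List.ofFn α) f) (t • x) x * ∏ i, x (α i) := by
    unfold dirDeriv
    rw [← (Fin.consEquiv (fun _ => Fin d)).sum_comp, Fintype.sum_prod_type_right]
    refine Finset.sum_congr rfl fun α _ => ?_
    conv_rhs => rw [pi_eq_sum_univ' x, map_sum, ← pi_eq_sum_univ' x, Finset.sum_mul]
    refine Finset.sum_congr rfl fun j _ => ?_
    simp only [Fin.consEquiv_apply, List.ofFn_succ, Fin.cons_zero, Fin.cons_succ,
      Fin.prod_univ_succ, pderivMulti, pderiv', map_smul, smul_eq_mul]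
    ring
  rw [key]
  unfold dirDeriv
  refine HasDerivAt.fun_sum fun α _ => HasDerivAt.mul_const ?_ _
  have h1 : HasFDerivAt (pderivMulti (List.ofFn α) f)
      (fderiv ℝ (pderivMulti (List.ofFn α) f) (t • x)) (t • x) :=
    ((contDiff_pderivMulti hf _).differentiable (by simp) _).hasFDerivAt
  have h2 : HasDerivAt (fun s : ℝ => s • x) x t := by
    simpa using (hasDerivAt_id t).smul_const x
  exact h1.comp_hasDerivAt t h2

lemma dirDeriv_zero {d : ℕ} (f : (Fin d → ℝ) → ℝ) (x : Fin d → ℝ) (t : ℝ) :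
    dirDeriv f x 0 t = f (t • x) := by
  simp [dirDeriv, pderivMulti]

lemma iteratedDeriv_line {d : ℕ} {f : (Fin d → ℝ) → ℝ} (hf : ContDiff ℝ (⊤ : ℕ∞) f)
    (x : Fin d → ℝ) (k : ℕ) :
    iteratedDeriv k (fun t : ℝ => f (t • x)) = dirDeriv f x k := by
  induction k with
  | zero => ext t; simp [dirDeriv_zero]
  | succ k ih =>
    rw [iteratedDeriv_succ, ih]
    ext t
    exact (hasDerivAt_dirDeriv hf x k t).deriv

lemma dirDeriv_one_zero {d : ℕ} {f : (Fin d → ℝ) → ℝ} (hf : ContDiff ℝ (⊤ : ℕ∞) f)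
    (x : Fin d → ℝ) : dirDeriv f x 1 0 = fderiv ℝ f 0 x := by
  have h2 : HasDerivAt (fun s : ℝ => s • x) x 0 := by
    simpa using (hasDerivAt_id (0 : ℝ)).smul_const x
  have h1 : HasFDerivAt f (fderiv ℝ f ((0 : ℝ) • x)) ((0 : ℝ) • x) :=
    (hf.differentiable (by simp) _).hasFDerivAt
  have h3 := h1.comp_hasDerivAt 0 h2
  have h4 := hasDerivAt_dirDeriv hf x 0 0
  have h5 : dirDeriv f x 0 = f ∘ fun s : ℝ => s • x := by
    ext t; simp [dirDeriv_zero]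
  rw [h5] at h4
  simpa using h4.unique h3

/-- `dirDeriv` at `0` is homogeneous of degree `k` in the direction. -/
lemma dirDeriv_smul {d : ℕ} (f : (Fin d → ℝ) → ℝ) (x : Fin d → ℝ) (k : ℕ) (s : ℝ) :
    dirDeriv f (s • x) k 0 = s ^ k * dirDeriv f x k 0 := by
  simp only [dirDeriv, zero_smul, Finset.mul_sum]
  refine Finset.sum_congr rfl fun α _ => ?_
  simp only [Pi.smul_apply, smul_eq_mul, Finset.prod_mul_distrib, Finset.prod_const,
    Finset.card_univ, Fintype.card_fin]
  ring

/-- The Gevrey bound with `σ ≤ 1` makes the Taylor coefficients along `x` geometric. -/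
lemma abs_dirDeriv_le {d : ℕ} {c σ : ℝ} (hc : 0 < c) (hσ : σ ≤ 1) {f : (Fin d → ℝ) → ℝ}
    (hG : ∀ y : Fin d → ℝ, ∀ α : List (Fin d), |pderivMulti α f y| ≤
        1 / 2 * c ^ α.length * ((Nat.factorial α.length : ℕ) : ℝ) ^ σ)
    {x : Fin d → ℝ} {R : ℝ} (hR : ∀ i, |x i| ≤ R) (k : ℕ) (t : ℝ) :
    |dirDeriv f x k t| ≤ 1 / 2 * (c * d * R) ^ k * (k.factorial : ℝ) := by
  have hfac : ((k.factorial : ℕ) : ℝ) ^ σ ≤ k.factorial := by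
    conv_rhs => rw [← Real.rpow_one (k.factorial : ℝ)]
    exact Real.rpow_le_rpow_of_exponent_le (by exact_mod_cast Nat.factorial_pos k) hσ
  have hterm : ∀ α : Fin k → Fin d, |pderivMulti (List.ofFn α) f (t • x) * ∏ i, x (α i)| ≤
      1 / 2 * c ^ k * (k.factorial : ℝ) * R ^ k := by
    intro α
    rw [abs_mul]
    have h1 := hG (t • x) (List.ofFn α)
    rw [List.length_ofFn] at h1
    have h2 : |∏ i, x (α i)| ≤ R ^ k := by
      rw [Finset.abs_prod]
      calc ∏ i, |x (α i)| ≤ ∏ _i : Fin k, R :=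
            Finset.prod_le_prod (fun _ _ => abs_nonneg _) fun i _ => hR _
        _ = R ^ k := by simp
    have h3 : |pderivMulti (List.ofFn α) f (t • x)| ≤ 1 / 2 * c ^ k * (k.factorial : ℝ) :=
      h1.trans (by gcongr)
    exact mul_le_mul h3 h2 (abs_nonneg _) (by positivity)
  calc |dirDeriv f x k t| ≤ ∑ α : Fin k → Fin d, 1 / 2 * c ^ k * (k.factorial : ℝ) * R ^ k :=
        (Finset.abs_sum_le_sum_abs _ _).trans (Finset.sum_le_sum fun α _ => hterm α)
    _ = 1 / 2 * (c * d * R) ^ k * (k.factorial : ℝ) := by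
        simp
        ring

/-- Under the Gevrey bound with `c d R < 1`, the Taylor series of `f` along `x` converges to `f x`:
the Lagrange remainder is at most `(c d R)^n / 2`. -/
lemma hasSum_taylor {d : ℕ} {c σ : ℝ} (hc : 0 < c) (hσ : σ ≤ 1) {f : (Fin d → ℝ) → ℝ}
    (hf : ContDiff ℝ (⊤ : ℕ∞) f)
    (hG : ∀ y : Fin d → ℝ, ∀ α : List (Fin d), |pderivMulti α f y| ≤
        1 / 2 * c ^ α.length * ((Nat.factorial α.length : ℕ) : ℝ) ^ σ)
    {x : Fin d → ℝ} {R : ℝ} (hR0 : 0 ≤ R) (hR : ∀ i, |x i| ≤ R) (hq : c * d * R < 1) :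
    HasSum (fun k => dirDeriv f x k 0 / (k.factorial : ℝ)) (f x) := by
  set q := c * d * R with hqdef
  have hq0 : 0 ≤ q := by positivity
  have hb := abs_dirDeriv_le hc hσ hG hR
  rw [← hqdef] at hb
  have hgeo := summable_geometric_of_lt_one hq0 hq
  have hcoef : ∀ k t, |dirDeriv f x k t / (k.factorial : ℝ)| ≤ 1 / 2 * q ^ k := by
    intro k t
    have hk : (0 : ℝ) < k.factorial := by exact_mod_cast Nat.factorial_pos k
    rw [abs_div, abs_of_pos hk, div_le_iff₀ hk]
    exact hb k t
  rw [hasSum_iff_tendsto_nat_of_summable_norm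
    (Summable.of_nonneg_of_le (fun _ => norm_nonneg _) (fun k => hcoef k 0) (hgeo.mul_left _))]
  rw [← Filter.tendsto_add_atTop_iff_nat 1]
  have hline : ContDiff ℝ (⊤ : ℕ∞) (fun t : ℝ => f (t • x)) :=
    hf.comp (contDiff_id.smul contDiff_const)
  have hpow : Filter.Tendsto (fun n => 1 / 2 * q ^ (n + 1)) Filter.atTop (nhds 0) := by
    have := (tendsto_pow_atTop_nhds_zero_of_lt_one hq0 hq).const_mul (1 / 2)
    rw [mul_zero] at this
    exact this.comp (Filter.tendsto_add_atTop_nat 1)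
  rw [tendsto_iff_norm_sub_tendsto_zero]
  refine squeeze_zero (fun _ => norm_nonneg _) (fun n => ?_) hpow
  have hle : ∀ j : ℕ, ((j : ℕ∞) : WithTop ℕ∞) ≤ ((⊤ : ℕ∞) : WithTop ℕ∞) := fun j => by
    exact_mod_cast le_top
  obtain ⟨s, -, hs⟩ := taylor_mean_remainder_lagrange_iteratedDeriv (f := fun t : ℝ => f (t • x))
    (x := 1) (x₀ := 0) (n := n) zero_ne_one
    ((hline.of_le (by exact_mod_cast hle (n + 1))).contDiffOn)
  rw [taylor_within_apply, iteratedDeriv_line hf] at hs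
  have hsum : ∑ k ∈ Finset.range (n + 1), (((k.factorial : ℝ))⁻¹ * ((1 : ℝ) - 0) ^ k) •
      iteratedDerivWithin k (fun t : ℝ => f (t • x)) (Set.uIcc 0 1) 0 =
      ∑ k ∈ Finset.range (n + 1), dirDeriv f x k 0 / (k.factorial : ℝ) := by
    refine Finset.sum_congr rfl fun k _ => ?_
    rw [iteratedDerivWithin_eq_iteratedDeriv (uniqueDiffOn_uIcc zero_ne_one)
      ((hline.of_le (hle k)).contDiffAt) (by simp), iteratedDeriv_line hf]
    simp [div_eq_inv_mul]
  rw [hsum, one_smul] at hs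
  rw [norm_sub_rev, Real.norm_eq_abs, hs]
  simpa using hcoef (n + 1) s

/-! ### Moments of the central difference coefficients -/

/-- The factor `(m!)² / ((m+ℓ)! (m-ℓ)!)` is `C(2m, m+ℓ) / C(2m, m)`; this is the coefficient
`centralCoeff m ℓ` multiplied by `ℓ`, for `ℓ ≠ 0`. -/
lemma centralCoeff_mul_self {m : ℕ} {ℓ : ℤ} (hℓ : ℓ ∈ Finset.Icc (-(m : ℤ)) m) (h0 : ℓ ≠ 0) :
    centralCoeff m ℓ * ℓ =
      (-1) ^ (ℓ + 1) * ((2 * m).choose (m + ℓ).toNat : ℝ) / ((2 * m).choose m : ℝ) := by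
  rw [Finset.mem_Icc] at hℓ
  have hℓ' : (ℓ : ℝ) ≠ 0 := by exact_mod_cast h0
  have hs : 2 * m - (m + ℓ).toNat = (m - ℓ).toNat := by omega
  have hm : 2 * m - m = m := by omega
  rw [centralCoeff, if_neg h0, Nat.cast_choose ℝ (by omega : (m + ℓ).toNat ≤ 2 * m),
    Nat.cast_choose ℝ (by omega : m ≤ 2 * m), hs, hm]
  have f1 : ((m + ℓ).toNat.factorial : ℝ) ≠ 0 := by exact_mod_cast Nat.factorial_ne_zero _
  have f2 : ((m - ℓ).toNat.factorial : ℝ) ≠ 0 := by exact_mod_cast Nat.factorial_ne_zero _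
  have f3 : ((2 * m).factorial : ℝ) ≠ 0 := by exact_mod_cast Nat.factorial_ne_zero _
  have f4 : (m.factorial : ℝ) ≠ 0 := by exact_mod_cast Nat.factorial_ne_zero _
  field_simp

/-- The `2m`-th finite difference of `r ↦ r^k` vanishes for `k < 2m`, in centred form. -/
lemma sum_alternating_choose_pow {m k : ℕ} (hk : k < 2 * m) :
    ∑ ℓ ∈ Finset.Icc (-(m : ℤ)) m,
      (-1 : ℝ) ^ (ℓ + 1) * ((2 * m).choose (m + ℓ).toNat : ℝ) * (ℓ : ℝ) ^ k = 0 := by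
  have h := congrFun (fwdDiff_iter_pow_eq_zero_of_lt (R := ℝ) hk) (-(m : ℝ))
  rw [fwdDiff_iter_eq_sum_shift] at h
  -- the substitution `ℓ = i - m` shifts the sign by `(-1)^(m+1)`
  have h2 : ∑ ℓ ∈ Finset.Icc (-(m : ℤ)) m,
      (-1 : ℝ) ^ (ℓ + 1) * ((2 * m).choose (m + ℓ).toNat : ℝ) * (ℓ : ℝ) ^ k =
      ∑ i ∈ Finset.range (2 * m + 1), (-1 : ℝ) ^ (m + 1) *
        (((-1 : ℤ) ^ (2 * m - i) * ((2 * m).choose i : ℤ)) • (-(m : ℝ) + i • (1 : ℝ)) ^ k) := by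
    refine Finset.sum_bij' (fun ℓ _ => (m + ℓ).toNat) (fun i _ => (i : ℤ) - m) ?_ ?_ ?_ ?_ ?_
    · intro ℓ hℓ; simp only [Finset.mem_Icc, Finset.mem_range] at *; omega
    · intro ℓ hℓ; simp only [Finset.mem_Icc, Finset.mem_range] at *; omega
    · intro ℓ hℓ; simp only [Finset.mem_Icc] at *; omega
    · intro ℓ hℓ; simp only [Finset.mem_range] at *; omega
    · intro ℓ hℓ
      simp only [Finset.mem_Icc] at hℓ
      obtain ⟨i, hi⟩ : ∃ i : ℕ, (m : ℤ) + ℓ = i := ⟨(m + ℓ).toNat, by omega⟩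
      have hℓi : ℓ = (i : ℤ) - m := by omega
      subst hℓi
      have ht : ((m : ℤ) + ((i : ℤ) - m)).toNat = i := by omega
      have hsign : (-1 : ℝ) ^ ((i : ℤ) - m + 1) = (-1) ^ (m + 1) * (-1) ^ (2 * m - i) := by
        rw [← pow_add, ← zpow_natCast,
          show (i : ℤ) - m + 1 = ((m + 1 + (2 * m - i) : ℕ) : ℤ) + 2 * ((i : ℤ) - 2 * m) by omega,
          zpow_add₀ (by norm_num), zpow_mul (-1 : ℝ) 2]
        norm_num
      rw [ht, hsign]
      simp only [zsmul_eq_mul, nsmul_eq_mul]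
      push_cast
      ring
  rw [h2, ← Finset.mul_sum, h]
  simp

/-- `a_{-ℓ} = -a_ℓ` for `ℓ ≠ 0`, so only `a_0 = 1` contributes. -/
lemma sum_centralCoeff (m : ℕ) : ∑ ℓ ∈ Finset.Icc (-(m : ℤ)) m, centralCoeff m ℓ = 1 := by
  set b : ℤ → ℝ := fun ℓ => centralCoeff m ℓ - if ℓ = 0 then 1 else 0 with hb
  have hodd : ∀ ℓ, b (-ℓ) = - b ℓ := by
    intro ℓ
    by_cases h : ℓ = 0
    · simp [hb, h, centralCoeff]
    · have hs : (-1 : ℝ) ^ (-ℓ + 1) = (-1) ^ (ℓ + 1) := by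
        rw [show -ℓ + 1 = (ℓ + 1) + 2 * (-ℓ) by ring, zpow_add₀ (by norm_num), zpow_mul]
        norm_num
      simp only [hb, centralCoeff, neg_eq_zero, h, if_false, hs, sub_neg_eq_add,
        ← sub_eq_add_neg, Int.cast_neg]
      rw [neg_mul, neg_mul, div_neg, mul_right_comm]
      ring
  have hsym : ∑ ℓ ∈ Finset.Icc (-(m : ℤ)) m, b ℓ = ∑ ℓ ∈ Finset.Icc (-(m : ℤ)) m, b (-ℓ) := by
    refine Finset.sum_equiv (Equiv.neg ℤ) (fun ℓ => ?_) fun ℓ _ => by simp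
    simp only [Finset.mem_Icc, Equiv.neg_apply]
    omega
  have hz : ∑ ℓ ∈ Finset.Icc (-(m : ℤ)) m, b ℓ = 0 := by
    have h1 := hsym
    simp only [hodd, Finset.sum_neg_distrib] at h1
    linarith
  simp only [hb, Finset.sum_sub_distrib, Finset.sum_ite_eq', Finset.mem_Icc] at hz
  rw [if_pos (by omega)] at hz
  linarith

/-- The moments `Σ a_ℓ ℓ^(k+1)`, for `k + 1 ≤ 2m`, are `1` for `k = 0` and `0` otherwise; this is
`sum_alternating_choose_pow` with the term at `ℓ = 0` treated separately. -/
lemma sum_centralCoeff_mul_pow_succ {m k : ℕ} (hk : k < 2 * m) :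
    ∑ ℓ ∈ Finset.Icc (-(m : ℤ)) m, centralCoeff m ℓ * (ℓ : ℝ) ^ (k + 1) =
      if k = 0 then 1 else 0 := by
  have hC : ((2 * m).choose m : ℝ) ≠ 0 := by
    exact_mod_cast (Nat.choose_pos (by omega : m ≤ 2 * m)).ne'
  -- at `ℓ = 0` the two summands differ by `0^k`
  have hterm : ∀ ℓ ∈ Finset.Icc (-(m : ℤ)) m, centralCoeff m ℓ * (ℓ : ℝ) ^ (k + 1) =
      (-1 : ℝ) ^ (ℓ + 1) * ((2 * m).choose (m + ℓ).toNat : ℝ) * (ℓ : ℝ) ^ k /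
        ((2 * m).choose m : ℝ) + if ℓ = 0 then (if k = 0 then 1 else 0) else 0 := by
    intro ℓ hℓ
    by_cases h0 : ℓ = 0
    · subst h0
      by_cases hk0 : k = 0
      · subst hk0
        simp
        field_simp
        norm_num
      · simp [hk0]
    · rw [pow_succ', ← mul_assoc, centralCoeff_mul_self hℓ h0, if_neg h0]
      ring
  rw [Finset.sum_congr rfl hterm, Finset.sum_add_distrib, ← Finset.sum_div,
    sum_alternating_choose_pow hk, Finset.sum_ite_eq', if_pos (by simp)]
  simp

/-- Each of the `2m` terms with `ℓ ≠ 0` has `|a_ℓ ℓ| ≤ 1`, as `C(2m, m)` is the largest binomial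
coefficient. -/
lemma abs_sum_centralCoeff_mul_pow_succ_le (m k : ℕ) :
    |∑ ℓ ∈ Finset.Icc (-(m : ℤ)) m, centralCoeff m ℓ * (ℓ : ℝ) ^ (k + 1)| ≤
      2 * (m : ℝ) ^ (k + 1) := by
  have h0mem : (0 : ℤ) ∈ Finset.Icc (-(m : ℤ)) m := by simp
  rw [← Finset.sum_erase (a := (0 : ℤ)) _ (by simp)]
  calc _ ≤ ∑ ℓ ∈ (Finset.Icc (-(m : ℤ)) m).erase 0, |centralCoeff m ℓ * (ℓ : ℝ) ^ (k + 1)| :=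
        Finset.abs_sum_le_sum_abs _ _
    _ ≤ ∑ ℓ ∈ (Finset.Icc (-(m : ℤ)) m).erase 0, (m : ℝ) ^ k := by
        refine Finset.sum_le_sum fun ℓ hℓ => ?_
        obtain ⟨h0, hℓ⟩ := Finset.mem_erase.1 hℓ
        rw [pow_succ', ← mul_assoc, centralCoeff_mul_self hℓ h0, abs_mul, abs_div, abs_mul,
          abs_zpow, abs_neg, abs_one, one_zpow, one_mul, Nat.abs_cast, Nat.abs_cast, abs_pow]
        have h1 : ((2 * m).choose (m + ℓ).toNat : ℝ) / ((2 * m).choose m : ℝ) ≤ 1 := by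
          refine div_le_one_of_le₀ ?_ (by positivity)
          exact_mod_cast Nat.choose_le_centralBinom (m + ℓ).toNat m
        have h2 : |(ℓ : ℝ)| ≤ m := by
          rw [Finset.mem_Icc] at hℓ
          exact abs_le.2 ⟨by exact_mod_cast hℓ.1, by exact_mod_cast hℓ.2⟩
        calc _ ≤ 1 * (m : ℝ) ^ k := by gcongr
          _ = _ := one_mul _
    _ = 2 * (m : ℝ) ^ (k + 1) := by
        rw [Finset.sum_const, Finset.card_erase_of_mem h0mem, Int.card_Icc,
          show ((m : ℤ) + 1 - -(m : ℤ)).toNat - 1 = 2 * m by omega, nsmul_eq_mul]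
        push_cast
        ring

/-! ### The error bound -/

theorem smoothing_close_to_linearization
    (d m : ℕ) (hm : 2 ≤ m) (c σ : ℝ) (hc : 0 < c) (hσ : σ ≤ 1)
    (f : (Fin d → ℝ) → ℝ) (hf : ContDiff ℝ (⊤ : ℕ∞) f)
    (hGevrey : ∀ y : Fin d → ℝ, ∀ α : List (Fin d),
      |pderivMulti α f y| ≤
        1 / 2 * c ^ α.length * ((Nat.factorial α.length : ℕ) : ℝ) ^ σ)
    (x : Fin d → ℝ) (hx : (m : ℝ) * c * d * (⨆ i, |x i|) < 1) :
    |smoothing m f x - f 0 - fderiv ℝ f 0 x| ≤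
      2 * ∑' k : ℕ,
        ((m : ℝ) ^ (k + (2 * m + 1)) / (Nat.factorial (k + (2 * m + 1)) : ℝ)) *
          |∑ α : Fin (k + (2 * m + 1)) → Fin d,
            pderivMulti (List.ofFn α) f 0 * ∏ i, x (α i)| := by
  have hm0 : (0 : ℝ) < m := by exact_mod_cast (by omega : 0 < m)
  set R := ⨆ i, |x i| with hRdef
  have hR0 : 0 ≤ R := Real.iSup_nonneg fun i => abs_nonneg _
  have hR : ∀ i, |x i| ≤ R := fun i => le_ciSup (f := fun i => |x i|) (Set.finite_range _).bddAbove i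
  set A : ℕ → ℝ := fun k => dirDeriv f x k 0 / (k.factorial : ℝ) with hA
  set M : ℕ → ℝ := fun k => ∑ ℓ ∈ Finset.Icc (-(m : ℤ)) m, centralCoeff m ℓ * (ℓ : ℝ) ^ k with hM
  have hpt : ∀ ℓ ∈ Finset.Icc (-(m : ℤ)) m,
      HasSum (fun k => centralCoeff m ℓ * ((ℓ : ℝ) ^ k * A k))
        (centralCoeff m ℓ * f ((ℓ : ℝ) • x)) := by
    intro ℓ hℓ
    have habs : |(ℓ : ℝ)| ≤ m := by
      rw [Finset.mem_Icc] at hℓ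
      exact abs_le.2 ⟨by exact_mod_cast hℓ.1, by exact_mod_cast hℓ.2⟩
    have h := hasSum_taylor hc hσ hf hGevrey (x := (ℓ : ℝ) • x) (R := m * R) (by positivity)
      (fun i => by
        rw [Pi.smul_apply, smul_eq_mul, abs_mul]
        exact mul_le_mul habs (hR i) (abs_nonneg _) hm0.le)
      (by linarith [show c * d * (m * R) = m * c * d * R by ring])
    simp only [dirDeriv_smul, mul_div_assoc] at h
    exact h.mul_left _
  have hS : HasSum (fun k => M k * A k) (smoothing m f x) := by
    have h := hasSum_sum hpt
    simpa only [hM, Finset.sum_mul, mul_assoc, smoothing] using h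
  have hhead : ∑ k ∈ Finset.range (2 * m + 1), M k * A k = f 0 + fderiv ℝ f 0 x := by
    have hM0 : M 0 = 1 := by simpa [hM] using sum_centralCoeff m
    have hMs : ∀ k ∈ Finset.range (2 * m), M (k + 1) * A (k + 1) = if k = 0 then A 1 else 0 := by
      intro k hk
      simp only [hM]
      rw [sum_centralCoeff_mul_pow_succ (Finset.mem_range.1 hk)]
      by_cases h : k = 0 <;> simp [h]
    rw [Finset.sum_range_succ', Finset.sum_congr rfl hMs, Finset.sum_ite_eq',
      if_pos (Finset.mem_range.2 (by omega)), hM0]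
    simp only [hA, dirDeriv_one_zero hf, dirDeriv_zero]
    simp [add_comm]
  have htail : HasSum (fun k => M (k + (2 * m + 1)) * A (k + (2 * m + 1)))
      (smoothing m f x - f 0 - fderiv ℝ f 0 x) := by
    refine (hasSum_nat_add_iff (f := fun k => M k * A k) (2 * m + 1)).2 ?_
    rwa [hhead, sub_sub, sub_add_cancel]
  -- the majorant is summable: its terms are at most `(m c d R)^k / 2`
  have hsummable : Summable fun k => (m : ℝ) ^ k / (k.factorial : ℝ) * |dirDeriv f x k 0| := by
    have hq0 : 0 ≤ (m : ℝ) * c * d * R := by positivity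
    refine Summable.of_nonneg_of_le (fun k => by positivity) (fun k => ?_)
      ((summable_geometric_of_lt_one hq0 hx).mul_left (1 / 2))
    have hk : (0 : ℝ) < k.factorial := by exact_mod_cast Nat.factorial_pos k
    calc (m : ℝ) ^ k / (k.factorial : ℝ) * |dirDeriv f x k 0|
        ≤ (m : ℝ) ^ k / (k.factorial : ℝ) * (1 / 2 * (c * d * R) ^ k * (k.factorial : ℝ)) := by
          gcongr
          exact abs_dirDeriv_le hc hσ hGevrey hR k 0
      _ = 1 / 2 * ((m : ℝ) * c * d * R) ^ k := by
          field_simp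
          ring
  have hshift := (summable_nat_add_iff (2 * m + 1)).2 hsummable
  have hdir : ∀ k, ∑ α : Fin k → Fin d, pderivMulti (List.ofFn α) f 0 * ∏ i, x (α i) =
      dirDeriv f x k 0 := fun k => by simp [dirDeriv]
  simp only [hdir]
  rw [← htail.tsum_eq, ← Real.norm_eq_abs]
  refine tsum_of_norm_bounded (hshift.hasSum.mul_left 2) fun k => ?_
  rw [Real.norm_eq_abs, abs_mul, hA, abs_div, Nat.abs_cast]
  calc _ ≤ 2 * (m : ℝ) ^ (k + (2 * m + 1)) *
        (|dirDeriv f x (k + (2 * m + 1)) 0| / ((k + (2 * m + 1)).factorial : ℝ)) := by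
        gcongr
        exact abs_sum_centralCoeff_mul_pow_succ_le m (k + 2 * m)
    _ = _ := by ring
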